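/- Let M be a centrally endo-AIP right R-module with S = End_R(M). If S has right uniform dimension 1, i.e., the right S-module S_S is uniform (every two nonzero right ideals of S have nonzero intersection), then S is a prime ring. -/

import Mathlib

/-- A submodule `N` of `M` is *fully invariant* if it is stable under every
endomorphism of `M`. -/
def IsFullyInvariant {R M : Type*} [Ring R] [AddCommGroup M] [Module R M]
    (N : Submodule R M) : Prop :=
  ∀ φ : Module.End R M, ∀ n ∈ N, φ n ∈ N

/-- `M` is a *centrally endo-AIP* module: for every fully invariant submodule `N`
of `M`, the left annihilator of `N` in `S = End_R(M)` is a centrally s-unital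
ideal of `S`, i.e. every `φ` annihilating `N` satisfies `φ * ψ = φ` for some
central element `ψ` of `S` annihilating `N`. -/
def IsCentrallyEndoAIP (R M : Type*) [Ring R] [AddCommGroup M] [Module R M] : Prop :=
  ∀ N : Submodule R M, IsFullyInvariant N →
    ∀ φ : Module.End R M, (∀ n ∈ N, φ n = 0) →
      ∃ ψ : Module.End R M, (∀ n ∈ N, ψ n = 0) ∧
        (∀ g : Module.End R M, ψ * g = g * ψ) ∧ φ * ψ = φ

/-- `M` is an *endo-AIP* module: for every fully invariant submodule `N` of `M`,
the left annihilator of `N` in `S = End_R(M)` is a right s-unital ideal of `S`. -/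
def IsEndoAIP (R M : Type*) [Ring R] [AddCommGroup M] [Module R M] : Prop :=
  ∀ N : Submodule R M, IsFullyInvariant N →
    ∀ φ : Module.End R M, (∀ n ∈ N, φ n = 0) →
      ∃ ψ : Module.End R M, (∀ n ∈ N, ψ n = 0) ∧ φ * ψ = φ

/-- A ring `S` is a *(left) centrally AIP* ring: the left annihilator of every
two-sided ideal of `S` is a centrally s-unital ideal of `S`. -/
def IsCentrallyAIPRing (S : Type*) [Ring S] : Prop :=
  ∀ I : TwoSidedIdeal S, ∀ a : S, (∀ x ∈ I, a * x = 0) →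
    ∃ z : S, (∀ x ∈ I, z * x = 0) ∧ (∀ s : S, z * s = s * z) ∧ a * z = a

/-!
If `a S b = 0`, then `b M` lies in the largest fully invariant submodule on which `a` vanishes.
Applying the hypothesis to that submodule yields `ψ` with `ψ a = a` and `ψ b = 0`. Left
multiplication by `ψ` is then the identity on `a S` and zero on `b S`, so `a S ∩ b S = 0`, and
uniformity of `S_S` forces `a = 0` or `b = 0`.
-/

theorem disjoint_span_singleton_of_mul_eq_self_of_mul_eq_zero {S : Type*} [Semiring S]
    {e a b : S} (ha : e * a = a) (hb : e * b = 0) :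
    Disjoint (Submodule.span Sᵐᵒᵖ {a}) (Submodule.span Sᵐᵒᵖ {b}) := by
  rw [Submodule.disjoint_def]
  intro x hxa hxb
  obtain ⟨s, rfl⟩ := Submodule.mem_span_singleton.mp hxa
  obtain ⟨t, ht⟩ := Submodule.mem_span_singleton.mp hxb
  calc s • a = e * (s • a) := by rw [mul_smul_comm, ha]
    _ = e * (t • b) := by rw [ht]
    _ = 0 := by rw [mul_smul_comm, hb, smul_zero]

section FullyInvariantCore

variable {R M : Type*} [Ring R] [AddCommGroup M] [Module R M]

/-- The largest fully invariant submodule of `M` contained in `N`, encoded as the intersection of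
the preimages of `N` under all endomorphisms of `M`. -/
def fullyInvariantCore (N : Submodule R M) : Submodule R M :=
  ⨅ φ : Module.End R M, N.comap φ

theorem mem_fullyInvariantCore {N : Submodule R M} {m : M} :
    m ∈ fullyInvariantCore N ↔ ∀ φ : Module.End R M, φ m ∈ N := by
  simp only [fullyInvariantCore, Submodule.mem_iInf, Submodule.mem_comap]

theorem fullyInvariantCore_le (N : Submodule R M) : fullyInvariantCore N ≤ N :=
  fun _ hm => mem_fullyInvariantCore.mp hm 1

theorem isFullyInvariant_fullyInvariantCore (N : Submodule R M) :
    IsFullyInvariant (fullyInvariantCore N) :=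
  fun φ _ hm => mem_fullyInvariantCore.mpr fun s => mem_fullyInvariantCore.mp hm (s * φ)

theorem range_le_fullyInvariantCore_ker_iff {a b : Module.End R M} :
    LinearMap.range b ≤ fullyInvariantCore (LinearMap.ker a) ↔
      ∀ s : Module.End R M, a * s * b = 0 := by
  simp only [SetLike.le_def, LinearMap.mem_range, forall_exists_index, forall_apply_eq_imp_iff,
    mem_fullyInvariantCore, LinearMap.mem_ker, LinearMap.ext_iff, Module.End.mul_apply,
    LinearMap.zero_apply]
  exact forall_comm

end FullyInvariantCore

theorem stmt_17_general (R M : Type*) [Ring R] [AddCommGroup M] [Module R M]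
    (h : ∀ N : Submodule R M, IsFullyInvariant N →
      ∀ φ : Module.End R M, (∀ n ∈ N, φ n = 0) →
        ∃ ψ : Module.End R M, (∀ n ∈ N, ψ n = 0) ∧ ψ * φ = φ)
    (huniform : ∀ I J : Submodule (Module.End R M)ᵐᵒᵖ (Module.End R M),
      I ≠ ⊥ → J ≠ ⊥ → I ⊓ J ≠ ⊥) :
    ∀ a b : Module.End R M, (∀ s : Module.End R M, a * s * b = 0) → a = 0 ∨ b = 0 := by
  intro a b hab
  obtain ⟨ψ, hψ, hψa⟩ := h _ (isFullyInvariant_fullyInvariantCore (LinearMap.ker a)) a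
    (fullyInvariantCore_le _)
  have hψb : ψ * b = 0 := LinearMap.ext fun m =>
    hψ _ (range_le_fullyInvariantCore_ker_iff.mpr hab (LinearMap.mem_range_self b m))
  by_contra! hne
  exact huniform _ _ (Submodule.span_singleton_eq_bot.not.mpr hne.1)
    (Submodule.span_singleton_eq_bot.not.mpr hne.2)
    (disjoint_span_singleton_of_mul_eq_self_of_mul_eq_zero hψa hψb).eq_bot

/-- If `M` is a centrally endo-AIP module whose endomorphism ring `S`
has right uniform dimension 1 (any two nonzero right ideals of `S` intersect
nontrivially), then `S` is a prime ring. -/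
theorem stmt_17 (R M : Type*) [Ring R] [AddCommGroup M] [Module R M]
    (h : IsCentrallyEndoAIP R M)
    (huniform : ∀ I J : Submodule (Module.End R M)ᵐᵒᵖ (Module.End R M),
      I ≠ ⊥ → J ≠ ⊥ → I ⊓ J ≠ ⊥) :
    ∀ a b : Module.End R M, (∀ s : Module.End R M, a * s * b = 0) → a = 0 ∨ b = 0 := by
  refine stmt_17_general R M (fun N hN φ hφ => ?_) huniform
  obtain ⟨ψ, hψ, hcentral, hφψ⟩ := h N hN φ hφ
  exact ⟨ψ, hψ, (hcentral φ).trans hφψ⟩
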